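/- arXiv:2405.18121 — 6 statements merged into one kernel-verified Lean document; each statement's English description precedes it below -/
import Mathlib

section
/- Let L/K be a finite Galois field extension of degree n with Galois group G = {σ₁, ..., σₙ}, let x₁, ..., xₙ be a K-basis of L, and let B be the n × n matrix with (i,j) entry σⱼ(xᵢ). If K has characteristic 2, or if the Sylow 2-subgroup of G is not cyclic, then det B ∈ K. -/
/-!
An automorphism `g` permutes the columns of `B` by left translation on `G`, so it multiplies `det B`
by the sign of that permutation, which is `1` in characteristic 2. Left translation by `g` on `G`
consists of `[G : ⟨g⟩]` copies of left translation by `g` on `⟨g⟩`, hence it is even as soon as this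
index is. If the index is odd, then `⟨g⟩` contains a Sylow 2-subgroup of `G`, which is thus cyclic.
-/

open Equiv.Perm

section LeftTranslation

variable {G : Type*} [Group G]

theorem exists_sylow_le_of_not_dvd_index [Finite G] {p : ℕ} [Fact p.Prime] {H : Subgroup G}
    (hH : ¬ p ∣ H.index) : ∃ P : Sylow p G, (P : Subgroup G) ≤ H := by
  obtain ⟨Q⟩ : Nonempty (Sylow p H) := Sylow.nonempty
  have hindex : ¬ p ∣ ((Q : Subgroup H).map H.subtype).index := by
    rw [Subgroup.index_map_subtype]
    exact Nat.Prime.not_dvd_mul Fact.out Q.not_dvd_index hH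
  exact ⟨(Q.isPGroup'.map H.subtype).toSylow hindex, Subgroup.map_subtype_le _⟩

variable [Fintype G] [DecidableEq G]

theorem sign_mulLeft_coe_eq_pow_index (H : Subgroup G) [Fintype H] (h : H) :
    sign (Equiv.mulLeft (h : G)) = sign (Equiv.mulLeft h) ^ H.index := by
  classical
  obtain ⟨T, hT, -⟩ := H.exists_isComplement_right 1
  have hsign : sign (Equiv.mulLeft (h : G)) =
      sign (Equiv.prodCongrLeft fun _ : T => Equiv.mulLeft h) :=
    sign_eq_sign_of_equiv _ _ hT.equiv fun g => hT.equiv_mul_left h g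
  rw [hsign, sign_prodCongrLeft, Finset.prod_const, Finset.card_univ, ← hT.card_right,
    Nat.card_eq_fintype_card]

theorem sign_mulLeft_eq_one_of_even_index {H : Subgroup G} (hH : Even H.index) {g : G}
    (hg : g ∈ H) : sign (Equiv.mulLeft g) = 1 := by
  have : Fintype H := .ofFinite H
  obtain ⟨k, hk⟩ := hH
  calc sign (Equiv.mulLeft g)
      = sign (Equiv.mulLeft (⟨g, hg⟩ : H)) ^ H.index := sign_mulLeft_coe_eq_pow_index H ⟨g, hg⟩
    _ = 1 := by rw [hk, ← two_mul, pow_mul, Int.units_sq, one_pow]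

theorem sign_mulLeft_eq_one_of_forall_sylow_not_isCyclic
    (hG : ∀ P : Sylow 2 G, ¬ IsCyclic P) (g : G) : sign (Equiv.mulLeft g) = 1 := by
  refine sign_mulLeft_eq_one_of_even_index ?_ (Subgroup.mem_zpowers g)
  by_contra hodd
  obtain ⟨P, hP⟩ := exists_sylow_le_of_not_dvd_index (mt even_iff_two_dvd.mpr hodd)
  exact hG P (Subgroup.isCyclic_of_le hP)

end LeftTranslation

theorem smul_det_smul_eq_sign_mul_det {G S ι : Type*} [Group G] [Fintype G] [DecidableEq G]
    [CommRing S] [MulSemiringAction G S] [Fintype ι] [DecidableEq ι] (σ : ι ≃ G) (x : ι → S)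
    (g : G) :
    g • (Matrix.of fun i j => σ j • x i).det =
      sign (Equiv.mulLeft g) * (Matrix.of fun i j => σ j • x i).det := by
  let B : Matrix ι ι S := .of fun i j => σ j • x i
  let π : Equiv.Perm ι := σ.symm.permCongr (Equiv.mulLeft g)
  have hcols : (MulSemiringAction.toRingHom G S g).mapMatrix B = B.submatrix id π := by
    ext i j
    simp [B, π, Equiv.permCongr_apply, mul_smul]
  calc g • B.det = (B.submatrix id π).det := by
        rw [← hcols, ← RingHom.map_det, MulSemiringAction.toRingHom_apply]
    _ = sign (Equiv.mulLeft g) * B.det := by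
        rw [Matrix.det_permute', sign_permCongr]

theorem intCast_units_eq_one_of_two_eq_zero {S : Type*} [Ring S] (hS : (2 : S) = 0) (u : ℤˣ) :
    ((u : ℤ) : S) = 1 := by
  obtain rfl | rfl := Int.units_eq_one_or u
  · simp
  · rw [Units.val_neg, Units.val_one, Int.cast_neg, Int.cast_one, neg_eq_iff_add_eq_zero,
      one_add_one_eq_two, hS]

theorem stmt8_general {R S G ι : Type*} [CommRing R] [CommRing S] [Algebra R S] [Group G]
    [MulSemiringAction G S] [Algebra.IsInvariant R S G] [Fintype ι] [DecidableEq ι]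
    (σ : ι ≃ G) (x : ι → S) (h : (2 : S) = 0 ∨ ∀ P : Sylow 2 G, ¬ IsCyclic P) :
    (Matrix.of fun i j => σ j • x i).det ∈ (algebraMap R S).range := by
  classical
  have : Fintype G := .ofEquiv ι σ
  refine Algebra.IsInvariant.isInvariant (G := G) _ fun g => ?_
  have hsign : ((sign (Equiv.mulLeft g) : ℤ) : S) = 1 := by
    obtain hS | hG := h
    · exact intCast_units_eq_one_of_two_eq_zero hS _
    · rw [sign_mulLeft_eq_one_of_forall_sylow_not_isCyclic hG, Units.val_one, Int.cast_one]
  rw [smul_det_smul_eq_sign_mul_det, hsign, one_mul]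

/-- Let L/K be a finite Galois extension of degree n with Galois group G
enumerated by σ, let x₁, ..., xₙ be a K-basis of L and B the matrix with
(i,j) entry σⱼ(xᵢ). If K has characteristic 2, or the Sylow 2-subgroup of G
is not cyclic, then det B lies in (the image of) K. -/
theorem stmt8 (K L : Type*) [Field K] [Field L] [Algebra K L]
    [FiniteDimensional K L] [IsGalois K L]
    (n : ℕ) (hn : Module.finrank K L = n) (σ : Fin n ≃ (L ≃ₐ[K] L))
    (x : Module.Basis (Fin n) K L)
    (h : ringChar K = 2 ∨ ∀ P : Sylow 2 (L ≃ₐ[K] L), ¬ IsCyclic P) :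
    (Matrix.of fun i j : Fin n => σ j (x i)).det ∈ (algebraMap K L).range :=
  stmt8_general σ x <| h.imp_left fun hK => by
    rw [← map_ofNat (algebraMap K L) 2, ← Nat.cast_ofNat, (ringChar.spec K 2).mpr hK.dvd, map_zero]
end

section
/- Let L/K be a finite Galois field extension of degree n with Galois group G = {σ₁, ..., σₙ}, let x₁, ..., xₙ be a K-basis of L, and let B be the n × n matrix with (i,j) entry σⱼ(xᵢ). If K has characteristic different from 2 and G has a cyclic Sylow 2-subgroup of order at least 2, then det B = μα, where μ ∈ K, α ∈ L satisfies α² ∈ K, and K(α) is the unique quadratic extension of K contained in L. -/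
/-!
An automorphism `g` permutes the columns of `B` by left translation, so `g (det B) = ± det B` with
the sign of translation by `g` on the Galois group. A generator of a nontrivial cyclic Sylow
2-subgroup translates by an odd number of cycles of even length, hence the sign character is
nontrivial, its kernel has index 2, and this kernel is the subgroup fixing `K(det B)`.
On the other hand, a group with cyclic Sylow `p`-subgroup `P` has at most one normal subgroup of
each `p`-power index, because such a subgroup is determined by its intersection with `P`.
By the Galois correspondence `K(det B)` is therefore the only quadratic subextension.
-/

section SubgroupsOfPrimePowerIndex

open Subgroup

theorem int_addSubgroup_eq_of_index_eq {H K : AddSubgroup ℤ} (h : H.index = K.index) : H = K := by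
  obtain ⟨a, rfl⟩ := Int.subgroup_cyclic H
  obtain ⟨b, rfl⟩ := Int.subgroup_cyclic K
  simp only [← AddSubgroup.zmultiples_eq_closure, Int.index_zmultiples] at h ⊢
  rw [← Int.zmultiples_natAbs a, ← Int.zmultiples_natAbs b, h]

variable {G : Type*} [Group G]

theorem eq_of_index_eq_of_isCyclic [IsCyclic G] {H K : Subgroup G} (h : H.index = K.index) :
    H = K := by
  obtain ⟨g, hg⟩ := IsCyclic.exists_generator (α := G)
  have hsurj : Function.Surjective (zpowersHom G g) := hg
  apply comap_injective hsurj
  apply toAddSubgroup.injective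
  apply int_addSubgroup_eq_of_index_eq
  exact (index_comap_of_surjective H hsurj).trans
    (h.trans (index_comap_of_surjective K hsurj).symm)

variable {p : ℕ} [Fact p.Prime] (P : Sylow p G) [P.FiniteIndex] {H K : Subgroup G}

theorem sup_sylow_eq_top {k : ℕ} (hH : H.index = p ^ k) : H ⊔ P = ⊤ := by
  have index_dvd : (H ⊔ P).index ∣ p ^ k := hH ▸ index_dvd_of_le le_sup_left
  have not_dvd_index : ¬p ∣ (H ⊔ P).index := fun hp ↦
    P.not_dvd_index (hp.trans (index_dvd_of_le le_sup_right))
  exact index_eq_one.mp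
    ((Nat.Prime.coprime_pow_of_not_dvd Fact.out not_dvd_index).eq_one_of_dvd index_dvd)

theorem le_of_inf_sylow_le [H.Normal] [K.Normal] {m n : ℕ} (hH : H.index = p ^ m)
    (hK : K.index = p ^ n) (h : H ⊓ P ≤ K) : H ≤ K := by
  obtain ⟨l, -, hl⟩ : ∃ l ≤ m + n, (H ⊓ K).index = p ^ l := by
    rw [← Nat.dvd_prime_pow Fact.out, pow_add, ← hH, ← hK, ← relIndex_mul_index inf_le_right,
      inf_relIndex_right]
    exact mul_dvd_mul_right (relIndex_dvd_index_of_normal H K) _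
  intro x hx
  have hx_sup : x ∈ (H ⊓ K) ⊔ P := sup_sylow_eq_top P hl ▸ mem_top x
  obtain ⟨y, hy, q, hq, rfl⟩ := mem_sup_of_normal_left.mp hx_sup
  exact mul_mem hy.2 (h ⟨(H.mul_mem_cancel_left hy.1).mp hx, hq⟩)

theorem eq_of_index_eq_prime_pow_of_isCyclic_sylow [IsCyclic P] [H.Normal] [K.Normal] {k : ℕ}
    (hH : H.index = p ^ k) (hK : K.index = p ^ k) : H = K := by
  have relIndex_sylow {N : Subgroup G} [N.Normal] (hN : N.index = p ^ k) :
      N.relIndex P = p ^ k := by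
    rw [← relIndex_sup_left, sup_sylow_eq_top P hN, relIndex_top_right, hN]
  have subgroupOf_eq : H.subgroupOf P = K.subgroupOf P :=
    eq_of_index_eq_of_isCyclic ((relIndex_sylow hH).trans (relIndex_sylow hK).symm)
  have inf_eq : H ⊓ P = K ⊓ P := subgroupOf_inj.mp subgroupOf_eq
  exact le_antisymm (le_of_inf_sylow_le P hH hK (inf_eq.trans_le inf_le_left))
    (le_of_inf_sylow_le P hK hH (inf_eq.ge.trans inf_le_left))

end SubgroupsOfPrimePowerIndex

section RegularSign

open Equiv.Perm Subgroup

variable {G : Type*} [Group G] [Fintype G] [DecidableEq G]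

variable (G) in
/-- The sign of the left regular representation: `g` is sent to the sign of the permutation
`x ↦ g * x` of `G`. It is the character through which the Galois group acts on `det B`. -/
def regularSign : G →* ℤˣ :=
  sign.comp (MulAction.toPermHom G G)

theorem eq_orderOf_of_mem_cycleType_toPermHom {g : G} {c : ℕ}
    (hc : c ∈ (MulAction.toPermHom G G g).cycleType) : c = orderOf g := by
  rw [cycleType_def, Multiset.mem_map] at hc
  obtain ⟨τ, hτ, rfl⟩ := hc
  obtain ⟨hcycle, -⟩ := mem_cycleFactorsFinset_iff.mp hτ
  obtain ⟨x, hx⟩ := hcycle.nonempty_support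
  rw [Function.comp_apply, ← hcycle.orderOf, orderOf_eq_orderOf_iff]
  intro n
  rw [hcycle.pow_eq_one_iff' (mem_support.mp hx), cycle_is_cycleOf hx hτ, cycleOf_pow_apply_self,
    ← map_pow]
  simp

theorem regularSign_apply (g : G) :
    regularSign G g = (-1) ^ (Nat.card G + (zpowers g).index) := by
  obtain rfl | hg := eq_or_ne g 1
  · simp
  have cycleType_eq := Multiset.eq_replicate_card.mpr
    fun _ ↦ eq_orderOf_of_mem_cycleType_toPermHom (g := g)
  have support_eq : (MulAction.toPermHom G G g).support = Finset.univ := by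
    ext x
    simp [hg]
  have sum_eq : (MulAction.toPermHom G G g).cycleType.sum = Nat.card G := by
    rw [sum_cycleType, support_eq, Finset.card_univ, Nat.card_eq_fintype_card]
  have card_eq : (MulAction.toPermHom G G g).cycleType.card = (zpowers g).index := by
    apply Nat.eq_of_mul_eq_mul_right (orderOf_pos g)
    rw [← smul_eq_mul, ← Multiset.sum_replicate, ← cycleType_eq, sum_eq, ← Nat.card_zpowers,
      index_mul_card]
  rw [regularSign, MonoidHom.comp_apply, sign_of_cycleType, sum_eq, card_eq]

theorem exists_regularSign_eq_neg_one (P : Sylow 2 G) [IsCyclic P] [Nontrivial P] :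
    ∃ g : G, regularSign G g = -1 := by
  obtain ⟨g, hg⟩ := (P : Subgroup G).isCyclic_iff_exists_zpowers_eq_top.mp ‹_›
  have even_card : Even (Nat.card G) := by
    have two_dvd : 2 ∣ Nat.card P :=
      P.isPGroup'.card_eq_or_dvd.resolve_left Finite.one_lt_card.ne'
    exact even_iff_two_dvd.mpr (two_dvd.trans (card_subgroup_dvd_card _))
  have odd_index : Odd (zpowers g).index := by
    rw [hg, ← Nat.not_even_iff_odd, even_iff_two_dvd]
    exact P.not_dvd_index
  exact ⟨g, by rw [regularSign_apply, (even_card.add_odd odd_index).neg_one_pow]⟩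

theorem index_ker_regularSign_eq_two (P : Sylow 2 G) [IsCyclic P] [Nontrivial P] :
    (regularSign G).ker.index = 2 := by
  obtain ⟨g, hg⟩ := exists_regularSign_eq_neg_one P
  have hsurj : Function.Surjective (regularSign G) := fun u ↦
    (Int.units_eq_one_or u).elim (fun hu ↦ ⟨1, by rw [hu, map_one]⟩) (fun hu ↦ ⟨g, hu ▸ hg⟩)
  rw [index_ker, MonoidHom.range_eq_top.mpr hsurj, card_top, Nat.card_eq_fintype_card,
    Fintype.card_units_int]

end RegularSign

section ConjugateMatrix

variable {K L ι : Type*} [Field K] [Field L] [Algebra K L]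

theorem mem_fixingSubgroup_adjoin_simple_iff {g : L ≃ₐ[K] L} {a : L} :
    g ∈ (IntermediateField.adjoin K {a}).fixingSubgroup ↔ g a = a := by
  simpa using IntermediateField.forall_mem_adjoin_smul_eq_self_iff K (S := {a}) g

/-- The matrix `B` of conjugates of a family `x`, whose determinant generates the quadratic
extension. Rows are indexed by the family and columns by the automorphisms. -/
def conjugateMatrix (σ : ι → (L ≃ₐ[K] L)) (x : ι → L) : Matrix ι ι L :=
  Matrix.of fun i j ↦ σ j (x i)

variable [Fintype ι] [DecidableEq ι] (σ : ι ≃ (L ≃ₐ[K] L))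

theorem map_det_conjugateMatrix [Fintype (L ≃ₐ[K] L)] [DecidableEq (L ≃ₐ[K] L)] (x : ι → L)
    (g : L ≃ₐ[K] L) :
    g (conjugateMatrix σ x).det =
      (regularSign (L ≃ₐ[K] L) g : ℤ) * (conjugateMatrix σ x).det := by
  rw [regularSign, MonoidHom.comp_apply,
    ← Equiv.Perm.sign_symm_trans_trans (MulAction.toPermHom _ _ g) σ.symm,
    ← Matrix.det_permute', AlgEquiv.map_det]
  congr 1
  ext i j
  simp [conjugateMatrix]

variable [FiniteDimensional K L] [IsGalois K L]

theorem algebraMap_discr_eq_det_conjugateMatrix_sq (x : ι → L) :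
    algebraMap K L (Algebra.discr K x) = (conjugateMatrix σ x).det ^ 2 := by
  have map_traceMatrix : (Algebra.traceMatrix K x).map (algebraMap K L) =
      conjugateMatrix σ x * (conjugateMatrix σ x).transpose := by
    ext i j
    simp only [Matrix.map_apply, Algebra.traceMatrix_apply, Algebra.traceForm_apply,
      trace_eq_sum_automorphisms, Matrix.mul_apply, Matrix.transpose_apply, conjugateMatrix,
      Matrix.of_apply, map_mul]
    exact (Equiv.sum_comp σ fun s ↦ s (x i) * s (x j)).symm
  rw [Algebra.discr_def, RingHom.map_det, RingHom.mapMatrix_apply, map_traceMatrix,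
    Matrix.det_mul, Matrix.det_transpose, sq]

theorem det_conjugateMatrix_ne_zero (x : Module.Basis ι K L) :
    (conjugateMatrix σ x).det ≠ 0 := by
  rw [← pow_ne_zero_iff two_ne_zero, ← algebraMap_discr_eq_det_conjugateMatrix_sq, map_ne_zero]
  exact Algebra.discr_not_zero_of_basis K x

theorem fixingSubgroup_adjoin_det_conjugateMatrix [Fintype (L ≃ₐ[K] L)]
    [DecidableEq (L ≃ₐ[K] L)] (hchar : ringChar K ≠ 2) (x : Module.Basis ι K L) :
    (IntermediateField.adjoin K {(conjugateMatrix σ x).det}).fixingSubgroup =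
      (regularSign (L ≃ₐ[K] L)).ker := by
  have hcharL : ringChar L ≠ 2 := Algebra.ringChar_eq K L ▸ hchar
  ext g
  rw [mem_fixingSubgroup_adjoin_simple_iff, map_det_conjugateMatrix,
    mul_eq_right₀ (det_conjugateMatrix_ne_zero σ x), MonoidHom.mem_ker]
  obtain hg | hg := Int.units_eq_one_or (regularSign (L ≃ₐ[K] L) g)
  · simp [hg]
  · simp [hg, Ring.neg_one_ne_one_of_char_ne_two hcharL]

end ConjugateMatrix

/-- Let L/K be a finite Galois extension of degree n with Galois group G, let
x₁, ..., xₙ be a K-basis of L and B the matrix with (i,j) entry σⱼ(xᵢ). If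
char K ≠ 2 and G has a cyclic Sylow 2-subgroup of order at least 2, then
det B = μ·α with μ ∈ K, α² ∈ K, and K(α) the unique quadratic extension of K
contained in L. -/
theorem stmt9 (K L : Type*) [Field K] [Field L] [Algebra K L]
    [FiniteDimensional K L] [IsGalois K L]
    (n : ℕ) (hn : Module.finrank K L = n) (σ : Fin n ≃ (L ≃ₐ[K] L))
    (x : Module.Basis (Fin n) K L)
    (hchar : ringChar K ≠ 2)
    (hsylow : ∃ P : Sylow 2 (L ≃ₐ[K] L), IsCyclic P ∧ 2 ≤ Nat.card P) :
    ∃ (μ : K) (α : L),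
      (Matrix.of fun i j : Fin n => σ j (x i)).det = algebraMap K L μ * α ∧
      α ^ 2 ∈ (algebraMap K L).range ∧
      Module.finrank K (IntermediateField.adjoin K {α}) = 2 ∧
      ∀ F : IntermediateField K L, Module.finrank K F = 2 →
        F = IntermediateField.adjoin K {α} := by
  classical
  obtain ⟨P, hcyclic, hcard⟩ := hsylow
  have : Nontrivial P := Finite.one_lt_card_iff_nontrivial.mp hcard
  set α := (conjugateMatrix σ x).det
  have index_two : (IntermediateField.adjoin K {α}).fixingSubgroup.index = 2 := by
    rw [fixingSubgroup_adjoin_det_conjugateMatrix σ hchar x, index_ker_regularSign_eq_two P]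
  refine ⟨1, α, by rw [map_one, one_mul]; rfl,
    ⟨Algebra.discr K x, algebraMap_discr_eq_det_conjugateMatrix_sq σ x⟩,
    by rw [IntermediateField.finrank_eq_fixingSubgroup_index, index_two], fun F hF ↦ ?_⟩
  rw [IntermediateField.finrank_eq_fixingSubgroup_index] at hF
  have := Subgroup.normal_of_index_eq_two hF
  have := Subgroup.normal_of_index_eq_two index_two
  have fixingSubgroup_eq :
      F.fixingSubgroup = (IntermediateField.adjoin K {α}).fixingSubgroup :=
    eq_of_index_eq_prime_pow_of_isCyclic_sylow P (k := 1) hF index_two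
  rw [← IsGalois.fixedField_fixingSubgroup F, fixingSubgroup_eq,
    IsGalois.fixedField_fixingSubgroup]
end

section
/- Let L/K be a finite Galois field extension of degree n with Galois group G = {σ₁, ..., σₙ}, let H₀ = ker(Tr_{L/K}) be the trace-zero hyperplane, let b₂, ..., bₙ be a K-basis of H₀, and for x ∈ L let E(x) be the n × n matrix whose first row is (σ₁(x), ..., σₙ(x)) and whose i-th row (2 ≤ i ≤ n) is (σ₁(bᵢ), ..., σₙ(bᵢ)). Let E₁ be the (n−1) × (n−1) matrix with (i,j) entry σⱼ(bᵢ) for 2 ≤ i, j ≤ n. Then det E(x) = (det E₁) · Tr_{L/K}(x) for all x ∈ L. -/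
/-!
The columns of `E(x)` add up to `(Tr x, 0, …, 0)ᵀ`, because the trace is the sum of the conjugates
and each `bᵢ` has trace zero. Replacing the first column by this sum does not change the
determinant, and expanding along the new column leaves `Tr x · det E₁`.

That the trace is the sum of the conjugates holds for any `n` distinct homomorphisms from an algebra
of rank `n` into a domain: by Dedekind's independence of characters, the matrix `(σᵢ(cₖ))` of their
values on a basis `c` has nonzero determinant, and it conjugates the matrix of multiplication by `x`
to `diag(σᵢ(x))`.
-/

theorem det_eq_sum_row_mul_det_submatrix_succAbove {R : Type*} [CommRing R] {n : ℕ}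
    (A : Matrix (Fin (n + 1)) (Fin (n + 1)) R) (i j : Fin (n + 1))
    (hA : ∀ k ≠ i, ∑ l, A k l = 0) :
    A.det = (-1) ^ (i + j : ℕ) * (∑ l, A i l) * (A.submatrix i.succAbove j.succAbove).det := by
  have det_updateCol : (A.updateCol j fun k ↦ ∑ l, A k l).det = A.det := by
    simpa using Matrix.det_updateCol_sum A j fun _ ↦ 1
  rw [← det_updateCol, Matrix.det_succ_column _ j, Finset.sum_eq_single i]
  · simp
  · intro k _ hk
    simp [hA k hk]
  · simp

theorem trace_eq_trace_of_mul_eq_mul {R ι : Type*} [CommRing R] [IsDomain R] [Fintype ι]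
    [DecidableEq ι] {A D M : Matrix ι ι R} (hM : M.det ≠ 0) (h : M * A = D * M) :
    A.trace = D.trace := by
  refine mul_left_cancel₀ hM ?_
  calc M.det * A.trace = (M.adjugate * (M * A)).trace := by
        simp [← Matrix.mul_assoc, Matrix.adjugate_mul]
    _ = (M.adjugate * (D * M)).trace := by rw [h]
    _ = (D * (M * M.adjugate)).trace := by rw [Matrix.trace_mul_comm, Matrix.mul_assoc]
    _ = M.det * D.trace := by simp [Matrix.mul_adjugate]

section AlgHom

variable {K L E ι : Type*} [CommRing K] [CommRing L] [Algebra K L] [CommRing E] [Algebra K E]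

theorem linearIndependent_algHom_apply_basis [IsDomain E] (c : Module.Basis ι K L)
    {σ : ι → L →ₐ[K] E} (hσ : Function.Injective σ) :
    LinearIndependent E fun i k ↦ σ i (c k) :=
  ((linearIndependent_toLinearMap K L E).comp σ hσ).map' (c.constr E).symm.toLinearMap
    (LinearEquiv.ker _)

variable [Fintype ι]

theorem det_algHom_apply_basis_ne_zero [IsDomain E] [DecidableEq ι] (c : Module.Basis ι K L)
    {σ : ι → L →ₐ[K] E} (hσ : Function.Injective σ) :
    (Matrix.of fun i k ↦ σ i (c k)).det ≠ 0 := by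
  rw [Ne, ← Matrix.exists_vecMul_eq_zero_iff]
  rintro ⟨v, hv, hvM⟩
  exact hv (Matrix.vecMul_injective_iff.2 (linearIndependent_algHom_apply_basis c hσ)
    (hvM.trans (Matrix.zero_vecMul _).symm))

theorem algHom_apply_basis_mul_leftMulMatrix [DecidableEq ι] (c : Module.Basis ι K L)
    (σ : ι → L →ₐ[K] E) (x : L) :
    (Matrix.of fun i k ↦ σ i (c k)) * (Algebra.leftMulMatrix c x).map (algebraMap K E) =
      Matrix.diagonal (fun i ↦ σ i x) * Matrix.of fun i k ↦ σ i (c k) := by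
  ext i k
  calc _ = σ i (∑ l, Algebra.leftMulMatrix c x l k • c l) := by
        simp [Matrix.mul_apply, Algebra.smul_def, mul_comm]
    _ = σ i (x * c k) := by simp only [Algebra.leftMulMatrix_eq_repr_mul, c.sum_repr]
    _ = _ := by simp [Matrix.diagonal_mul]

theorem algebraMap_trace_eq_sum_algHom [IsDomain E] (c : Module.Basis ι K L) {σ : ι → L →ₐ[K] E}
    (hσ : Function.Injective σ) (x : L) :
    algebraMap K E (Algebra.trace K L x) = ∑ i, σ i x := by
  classical
  calc algebraMap K E (Algebra.trace K L x)
      = ((Algebra.leftMulMatrix c x).map (algebraMap K E)).trace := by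
        rw [Algebra.trace_eq_matrix_trace c]
        exact AddMonoidHom.map_trace (algebraMap K E) _
    _ = (Matrix.diagonal fun i ↦ σ i x).trace :=
        trace_eq_trace_of_mul_eq_mul (det_algHom_apply_basis_ne_zero c hσ)
          (algHom_apply_basis_mul_leftMulMatrix c σ x)
    _ = ∑ i, σ i x := Matrix.trace_diagonal _

end AlgHom

theorem stmt10_general {K L E : Type*} [CommRing K] [CommRing L] [Algebra K L] [Module.Free K L]
    [CommRing E] [IsDomain E] [Algebra K E] {n : ℕ} (hn : Module.finrank K L = n + 1)
    {σ : Fin (n + 1) → L →ₐ[K] E} (hσ : Function.Injective σ) {b : Fin n → L}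
    (hb : ∀ i, Algebra.trace K L (b i) = 0) (x : L) :
    (Matrix.of fun i j : Fin (n + 1) =>
        Fin.cases (motive := fun _ => E) (σ j x) (fun i' => σ j (b i')) i).det =
      (Matrix.of fun i j : Fin n => σ j.succ (b i)).det *
        algebraMap K E (Algebra.trace K L x) := by
  have : Nontrivial K := (algebraMap K E).domain_nontrivial
  have : Module.Finite K L := Module.finite_of_finrank_pos (by lia)
  have sum_conj (y : L) : ∑ j, σ j y = algebraMap K E (Algebra.trace K L y) :=
    (algebraMap_trace_eq_sum_algHom (Module.finBasisOfFinrankEq K L hn) hσ y).symm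
  set A : Matrix (Fin (n + 1)) (Fin (n + 1)) E := Matrix.of fun i j =>
    Fin.cases (motive := fun _ => E) (σ j x) (fun i' => σ j (b i')) i
  have sum_first_row : ∑ j, A 0 j = algebraMap K E (Algebra.trace K L x) := sum_conj x
  have sum_other_rows : ∀ i ≠ 0, ∑ j, A i j = 0 := by
    refine Fin.cases (fun h ↦ absurd rfl h) fun i _ ↦ ?_
    simp [A, sum_conj, hb]
  have minor : A.submatrix (Fin.succAbove 0) (Fin.succAbove 0) =
      Matrix.of fun i j : Fin n ↦ σ j.succ (b i) := by
    ext i j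
    simp [A]
  rw [det_eq_sum_row_mul_det_submatrix_succAbove A 0 0 sum_other_rows, sum_first_row, minor]
  simp [mul_comm]

/-- Let L/K be a Galois extension of degree n with Galois group {σ₁, ..., σₙ},
let b₂, ..., bₙ be a K-basis of the trace-zero hyperplane H₀ = ker Tr, and let
E(x) be the n × n matrix whose first row is (σⱼ(x))ⱼ and whose later rows are
(σⱼ(bᵢ))ⱼ. Let E₁ be the (n-1) × (n-1) matrix with entries σⱼ(bᵢ), 2 ≤ i,j ≤ n.
Then det E(x) = det E₁ · Tr_{L/K}(x) for all x ∈ L.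
(Here the degree is n + 1 and the bᵢ are indexed by Fin n.) -/
theorem stmt10 (K L : Type*) [Field K] [Field L] [Algebra K L]
    [FiniteDimensional K L] [IsGalois K L]
    (n : ℕ) (hn : Module.finrank K L = n + 1)
    (σ : Fin (n + 1) ≃ (L ≃ₐ[K] L)) (b : Fin n → L)
    (hb_ind : LinearIndependent K b)
    (hb_span : Submodule.span K (Set.range b) = LinearMap.ker (Algebra.trace K L))
    (x : L) :
    (Matrix.of fun i j : Fin (n + 1) =>
        Fin.cases (motive := fun _ => L) (σ j x) (fun i' => σ j (b i')) i).det =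
      (Matrix.of fun i j : Fin n => σ j.succ (b i)).det *
        algebraMap K L (Algebra.trace K L x) := by
  have hb (i : Fin n) : Algebra.trace K L (b i) = 0 :=
    LinearMap.mem_ker.1 (hb_span ▸ Submodule.subset_span ⟨i, rfl⟩)
  exact stmt10_general hn (AlgEquiv.coe_toAlgHom_injective.comp σ.injective) hb x
end

section
/- Let L/K be a finite Galois field extension of degree n with Galois group G = {σ₁, ..., σₙ}, let H₀ = ker(Tr_{L/K}), let b₂, ..., bₙ be a K-basis of H₀, and let b₁ ∈ L with b₁ ∉ H₀. Then the K-linear map θ : L → L defined by θ(x) = det E(x), where E(x) is the n × n matrix with first row (σ₁(x), ..., σₙ(x)) and i-th row (σ₁(bᵢ), ..., σₙ(bᵢ)) for 2 ≤ i ≤ n, is a nonzero endomorphism of rank one whose kernel is exactly H₀. -/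
/-!
By Dedekind, distinct algebra homomorphisms `σⱼ : A → B` into a domain are linearly independent
over `B`, so a relation `∑ⱼ cⱼ σⱼ(vᵢ) = 0` holding for all members of a spanning family `v` forces
`c = 0`. Hence the alternating map `v ↦ det (σⱼ(vᵢ))` vanishes exactly on the linearly dependent
families of `dim A` vectors. Fixing all but the first vector to be a basis `b` of a hyperplane
leaves a linear map whose kernel is that hyperplane, so its range is a line.
-/

open Module

section AlgHomDet

variable {ι R A B : Type*} [Fintype ι] [DecidableEq ι] [CommRing R] [Ring A] [Algebra R A]
  [CommRing B] [Algebra R B]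

/-- The determinant `det (σⱼ(vᵢ))` attached to a finite family `σ` of algebra homomorphisms, as an
alternating map in the family of elements `v`. -/
def algHomDet (σ : ι → A →ₐ[R] B) : A [⋀^ι]→ₗ[R] B where
  __ := (Matrix.detRowAlternating.toMultilinearMap.restrictScalars R).compLinearMap
    fun _ => LinearMap.pi fun j => (σ j).toLinearMap
  map_eq_zero_of_eq' v _ _ hv hij :=
    Matrix.det_zero_of_row_eq (M := Matrix.of fun i j => σ j (v i)) hij
      (funext fun j => congrArg (σ j) hv)

theorem algHomDet_apply (σ : ι → A →ₐ[R] B) (v : ι → A) :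
    algHomDet σ v = (Matrix.of fun i j => σ j (v i)).det :=
  rfl

theorem algHomDet_ne_zero_of_span_eq_top [IsDomain B] {σ : ι → A →ₐ[R] B}
    (hσ : Function.Injective σ) {v : ι → A} (hv : Submodule.span R (Set.range v) = ⊤) :
    algHomDet σ v ≠ 0 := by
  rw [algHomDet_apply, ne_eq, ← Matrix.exists_mulVec_eq_zero_iff]
  rintro ⟨c, hc, hc_rel⟩
  have sum_smul_eq_zero : ∑ j, c j • (σ j).toLinearMap = 0 := by
    refine LinearMap.ext_on_range hv fun i => ?_
    simpa [Matrix.mulVec, dotProduct, mul_comm] using congrFun hc_rel i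
  have dedekind : LinearIndependent B fun j => (σ j).toLinearMap :=
    (linearIndependent_toLinearMap R A B).comp σ hσ
  exact hc (funext (Fintype.linearIndependent_iff.mp dedekind c sum_smul_eq_zero))

end AlgHomDet

section AlgHomDetCons

variable {R A B : Type*} [CommRing R] [Ring A] [Algebra R A] [CommRing B] [Algebra R B] {n : ℕ}

/-- The map `θ`: the determinant `algHomDet σ` as a linear function of its first argument, the
remaining arguments being fixed to `b`. -/
def algHomDetCons (σ : Fin (n + 1) → A →ₐ[R] B) (b : Fin n → A) : A →ₗ[R] B where
  toFun x := (algHomDet σ).curryLeft x b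
  map_add' x y := by rw [map_add, AlternatingMap.add_apply]
  map_smul' r x := by rw [map_smul, AlternatingMap.smul_apply, RingHom.id_apply]

theorem algHomDetCons_apply (σ : Fin (n + 1) → A →ₐ[R] B) (b : Fin n → A) (x : A) :
    algHomDetCons σ b x = algHomDet σ (Fin.cons x b) :=
  rfl

theorem algHomDetCons_eq_det (σ : Fin (n + 1) → A →ₐ[R] B) (b : Fin n → A) (x : A) :
    algHomDetCons σ b x =
      (Matrix.of fun i j : Fin (n + 1) =>
        Fin.cases (motive := fun _ => B) (σ j x) (fun i' => σ j (b i')) i).det := by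
  rw [algHomDetCons_apply, algHomDet_apply]
  congr 1
  ext i j
  cases i using Fin.cases <;> rfl

end AlgHomDetCons

section Field

variable {K : Type*} [Field K]

theorem algHomDet_eq_zero_iff {ι A B : Type*} [Fintype ι] [DecidableEq ι] [Nonempty ι] [Ring A]
    [Algebra K A] [CommRing B] [IsDomain B] [Algebra K B] {σ : ι → A →ₐ[K] B}
    (hσ : Function.Injective σ) (hι : Fintype.card ι = finrank K A) {v : ι → A} :
    algHomDet σ v = 0 ↔ ¬ LinearIndependent K v :=
  ⟨fun hdet hv =>
      algHomDet_ne_zero_of_span_eq_top hσ (hv.span_eq_top_of_card_eq_finrank hι) hdet,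
    (algHomDet σ).map_linearDependent v⟩

theorem ker_algHomDetCons {A B : Type*} [Ring A] [Algebra K A] [CommRing B] [IsDomain B]
    [Algebra K B] {n : ℕ} (hn : finrank K A = n + 1) {σ : Fin (n + 1) → A →ₐ[K] B}
    (hσ : Function.Injective σ) {b : Fin n → A} (hb : LinearIndependent K b) :
    LinearMap.ker (algHomDetCons σ b) = Submodule.span K (Set.range b) := by
  ext x
  rw [LinearMap.mem_ker, algHomDetCons_apply,
    algHomDet_eq_zero_iff hσ ((Fintype.card_fin _).trans hn.symm), linearIndependent_finCons,
    not_and_not_right]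
  exact ⟨fun h => h hb, fun hx _ => hx⟩

theorem finrank_range_eq_one_of_finrank_eq_finrank_ker_add_one {V W : Type*} [AddCommGroup V]
    [Module K V] [AddCommGroup W] [Module K W] {f : V →ₗ[K] W}
    (hf : finrank K V = finrank K (LinearMap.ker f) + 1) :
    finrank K (LinearMap.range f) = 1 := by
  have : FiniteDimensional K V := .of_finrank_pos (by omega)
  have rank_nullity := f.finrank_range_add_finrank_ker
  omega

theorem stmt11_general {A B : Type*} [Ring A] [Algebra K A] [CommRing B] [IsDomain B]
    [Algebra K B] {n : ℕ} (hn : finrank K A = n + 1) (σ : Fin (n + 1) → A →ₐ[K] B)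
    (hσ : Function.Injective σ) (b : Fin n → A) (hb : LinearIndependent K b) :
    ∃ θ : A →ₗ[K] B,
      (∀ x : A, θ x =
        (Matrix.of fun i j : Fin (n + 1) =>
          Fin.cases (motive := fun _ => B) (σ j x) (fun i' => σ j (b i')) i).det) ∧
      θ ≠ 0 ∧
      finrank K (LinearMap.range θ) = 1 ∧
      LinearMap.ker θ = Submodule.span K (Set.range b) := by
  have ker_eq := ker_algHomDetCons hn hσ hb
  have range_rank : finrank K (LinearMap.range (algHomDetCons σ b)) = 1 := by
    apply finrank_range_eq_one_of_finrank_eq_finrank_ker_add_one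
    rw [ker_eq, finrank_span_eq_card hb, Fintype.card_fin, hn]
  refine ⟨algHomDetCons σ b, algHomDetCons_eq_det σ b, fun h => ?_, range_rank, ker_eq⟩
  rw [h, LinearMap.range_zero, finrank_bot] at range_rank
  exact zero_ne_one range_rank

end Field

/-- With b₂, ..., bₙ a K-basis of H₀ = ker Tr and b₁ ∉ H₀, the K-linear map
θ : L → L given by θ(x) = det E(x), where E(x) is the n × n matrix with first
row (σⱼ(x))ⱼ and later rows (σⱼ(bᵢ))ⱼ, is a nonzero rank-one endomorphism whose
kernel is exactly H₀. (Here the degree is n + 1 and the bᵢ are indexed by Fin n.) -/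
theorem stmt11 (K L : Type*) [Field K] [Field L] [Algebra K L]
    [FiniteDimensional K L] [IsGalois K L]
    (n : ℕ) (hn : Module.finrank K L = n + 1)
    (σ : Fin (n + 1) ≃ (L ≃ₐ[K] L)) (b : Fin n → L)
    (hb_ind : LinearIndependent K b)
    (hb_span : Submodule.span K (Set.range b) = LinearMap.ker (Algebra.trace K L))
    (b₁ : L) (hb₁ : b₁ ∉ LinearMap.ker (Algebra.trace K L)) :
    ∃ θ : L →ₗ[K] L,
      (∀ x : L, θ x =
        (Matrix.of fun i j : Fin (n + 1) =>
          Fin.cases (motive := fun _ => L) (σ j x) (fun i' => σ j (b i')) i).det) ∧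
      θ ≠ 0 ∧
      Module.finrank K (LinearMap.range θ) = 1 ∧
      LinearMap.ker θ = LinearMap.ker (Algebra.trace K L) := by
  rw [← hb_span]
  exact stmt11_general hn (fun j => (σ j : L →ₐ[K] L))
    (AlgEquiv.coe_toAlgHom_injective.comp σ.injective) b hb_ind
end

section
/- Let L/K be a finite Galois field extension of degree n with Galois group G = {σ₁, ..., σₙ}, let H₀ = ker(Tr_{L/K}), and let b₂, ..., bₙ be a K-basis of H₀. Then the (n−1) × (n−1) matrix E₁ whose (i,j) entry is σⱼ(bᵢ), for 2 ≤ i, j ≤ n, is invertible. -/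
/-!
Let `E` be a field receiving as many distinct `K`-algebra homomorphisms `σ₁, …, σₙ` from `L` as `L`
has dimensions; for `L/K` Galois, `E = L`. In the coordinates given by the matrix `σⱼ(bᵢ)` of a
basis `b`, multiplication by `x` is diagonal with entries `σⱼ(x)`, so the trace is the sum
`T = σ₁ + ⋯ + σₙ`. An `E`-valued `K`-linear map that vanishes on `ker Tr` is an `E`-multiple of `T`.
By Dedekind's theorem `σ₁, …, σₙ` are linearly independent over `E`, so `T` is not in the span of
`σ₂, …, σₙ`, and these therefore stay independent after restriction to `ker Tr`. Evaluating
independent maps on a spanning family of the same size gives an invertible matrix.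
-/

open Matrix Module Submodule

section LinearAlgebra

theorem isUnit_matrix_of_linearIndependent_of_span_eq_top {ι R E V : Type*} [Fintype ι]
    [DecidableEq ι] [CommSemiring R] [Field E] [Algebra R E] [AddCommMonoid V] [Module R V]
    {f : ι → V →ₗ[R] E} (hf : LinearIndependent E f)
    {b : ι → V} (hb : span R (Set.range b) = ⊤) :
    IsUnit (of fun i j => f j (b i)) := by
  rw [← mulVec_injective_iff_isUnit]
  refine (injective_iff_map_eq_zero (of fun i j => f j (b i)).mulVecLin).2 fun v hv => ?_
  have combination_eq_zero : ∑ j, v j • f j = 0 := by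
    refine LinearMap.ext_on_range hb fun i => ?_
    simpa [mulVec, dotProduct, mul_comm] using congrFun hv i
  exact funext (Fintype.linearIndependent_iff.1 hf v combination_eq_zero)

theorem sum_notMem_span_image_compl_singleton {ι R M : Type*} [Fintype ι] [Ring R] [Nontrivial R]
    [AddCommGroup M] [Module R M] {f : ι → M} (hf : LinearIndependent R f) (i : ι) :
    ∑ j, f j ∉ span R (f '' {i}ᶜ) := by
  classical
  rw [← Finset.add_sum_erase _ _ (Finset.mem_univ i), Submodule.add_mem_iff_left]
  · exact hf.notMem_span_image fun hi => hi rfl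
  · exact sum_mem fun j hj => subset_span ⟨j, Finset.ne_of_mem_erase hj, rfl⟩

theorem span_range_subtype_mk_eq_top {ι R M : Type*} [Semiring R] [AddCommMonoid M] [Module R M]
    {W : Submodule R M} {b : ι → M} (hb : span R (Set.range b) = W) (hb_mem : ∀ i, b i ∈ W) :
    span R (Set.range fun i => (⟨b i, hb_mem i⟩ : W)) = ⊤ := by
  apply map_injective_of_injective W.injective_subtype
  rw [map_span, ← Set.range_comp, map_subtype_top]
  exact hb

theorem exists_eq_smulRight_of_ker_le_ker {K V M : Type*} [DivisionRing K]
    [AddCommGroup V] [Module K V] [AddCommGroup M] [Module K M]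
    {t : V →ₗ[K] K} {φ : V →ₗ[K] M} (h : LinearMap.ker t ≤ LinearMap.ker φ) :
    ∃ m, φ = t.smulRight m := by
  obtain rfl | t_ne_zero := eq_or_ne t 0
  · exact ⟨0, LinearMap.ext fun x => by simpa using h (x := x) (by simp)⟩
  obtain ⟨y, hy⟩ := LinearMap.surjective t_ne_zero 1
  refine ⟨φ y, LinearMap.ext fun x => sub_eq_zero.1 ?_⟩
  have sub_mem_ker : x - t x • y ∈ LinearMap.ker t := by simp [hy]
  simpa using h sub_mem_ker

theorem linearIndependent_domRestrict_ker {ι K V E : Type*} [Field K] [AddCommGroup V]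
    [Module K V] [Field E] [Algebra K E]
    {f : ι → V →ₗ[K] E} (hf : LinearIndependent E f) {t : V →ₗ[K] K}
    (ht : t.smulRight (1 : E) ∉ span E (Set.range f)) :
    LinearIndependent E fun i => (f i).domRestrict (LinearMap.ker t) := by
  refine hf.map (f := LinearMap.lcomp E E (LinearMap.ker t).subtype) ?_
  have ker_le : LinearMap.ker (LinearMap.lcomp E E (LinearMap.ker t).subtype) ≤
      span E {t.smulRight (1 : E)} := by
    intro φ hφ
    obtain ⟨e, rfl⟩ := exists_eq_smulRight_of_ker_le_ker (t := t) (φ := φ)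
      fun x hx => LinearMap.congr_fun hφ ⟨x, hx⟩
    refine mem_span_singleton.2 ⟨e, ?_⟩
    ext x
    simp
  exact (disjoint_span_singleton_of_notMem ht).mono_right ker_le

end LinearAlgebra

section Trace

variable {K L E : Type*} [CommRing K] [CommRing L] [Algebra K L]

theorem transpose_leftMulMatrix_mul_eq_mul_diagonal {ι κ : Type*} [Fintype ι] [DecidableEq ι]
    [Fintype κ] [DecidableEq κ] [CommRing E] [Algebra K E]
    (b : Basis ι K L) (σ : κ → L →ₐ[K] E) (x : L) :
    ((Algebra.leftMulMatrix b x).map (algebraMap K E))ᵀ * of (fun i j => σ j (b i)) =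
      of (fun i j => σ j (b i)) * diagonal fun j => σ j x := by
  ext i j
  have expansion : ∑ k, Algebra.leftMulMatrix b x k i • b k = x * b i := by
    simp only [Algebra.leftMulMatrix_eq_repr_mul, b.sum_repr]
  rw [mul_diagonal]
  simpa [mul_apply, Algebra.smul_def, mul_comm] using congrArg (σ j) expansion

theorem algebraMap_trace_eq_sum_of_injective {ι : Type*} [Fintype ι] [Field E] [Algebra K E]
    (b : Basis ι K L) {σ : ι → L →ₐ[K] E} (hσ : Function.Injective σ) (x : L) :
    algebraMap K E (Algebra.trace K L x) = ∑ i, σ i x := by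
  classical
  obtain ⟨P, hP⟩ : IsUnit (of fun i j => σ j (b i)) :=
    isUnit_matrix_of_linearIndependent_of_span_eq_top
      ((linearIndependent_toLinearMap K L E).comp σ hσ) b.span_eq
  set M := (Algebra.leftMulMatrix b x).map (algebraMap K E)
  have conj : Mᵀ = P.val * (diagonal fun i => σ i x) * P⁻¹.val := by
    rw [Units.eq_mul_inv_iff_mul_eq, hP]
    exact transpose_leftMulMatrix_mul_eq_mul_diagonal b σ x
  calc algebraMap K E (Algebra.trace K L x)
      = Mᵀ.trace := by
        rw [Algebra.trace_eq_matrix_trace b, trace_transpose]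
        exact AddMonoidHom.map_trace (algebraMap K E) _
    _ = ∑ i, σ i x := by rw [conj, trace_units_conj, trace_diagonal]

end Trace

theorem stmt12_general {K L E : Type*} [Field K] [CommRing L] [Algebra K L] [Field E] [Algebra K E]
    {n : ℕ} (hn : finrank K L = n + 1)
    {σ : Fin (n + 1) → L →ₐ[K] E} (hσ : Function.Injective σ) {b : Fin n → L}
    (hb_span : span K (Set.range b) = LinearMap.ker (Algebra.trace K L)) :
    IsUnit (of fun i j : Fin n => σ j.succ (b i)) := by
  have : FiniteDimensional K L := .of_finrank_eq_succ hn
  have hσ_ind : LinearIndependent E fun i => (σ i).toLinearMap :=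
    (linearIndependent_toLinearMap K L E).comp σ hσ
  have trace_eq_sum : (Algebra.trace K L).smulRight (1 : E) = ∑ i, (σ i).toLinearMap := by
    ext x
    simpa [Algebra.smul_def] using
      algebraMap_trace_eq_sum_of_injective (finBasisOfFinrankEq K L hn) hσ x
  have trace_notMem : (Algebra.trace K L).smulRight (1 : E) ∉
      span E (Set.range fun j : Fin n => (σ j.succ).toLinearMap) := by
    rw [trace_eq_sum, Set.range_comp' (fun i => (σ i).toLinearMap), Fin.range_succ]
    exact sum_notMem_span_image_compl_singleton hσ_ind 0
  have restrict_ind := linearIndependent_domRestrict_ker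
    (hσ_ind.comp Fin.succ (Fin.succ_injective n)) trace_notMem
  have hb_mem (i : Fin n) : b i ∈ LinearMap.ker (Algebra.trace K L) :=
    hb_span ▸ subset_span (Set.mem_range_self i)
  exact isUnit_matrix_of_linearIndependent_of_span_eq_top restrict_ind
    (span_range_subtype_mk_eq_top hb_span hb_mem)

/-- With b₂, ..., bₙ a K-basis of H₀ = ker Tr, the (n-1) × (n-1) matrix E₁ with
(i,j) entry σⱼ(bᵢ), 2 ≤ i,j ≤ n, is invertible. (Here the degree is n + 1 and
the bᵢ are indexed by Fin n.) -/
theorem stmt12 (K L : Type*) [Field K] [Field L] [Algebra K L]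
    [FiniteDimensional K L] [IsGalois K L]
    (n : ℕ) (hn : Module.finrank K L = n + 1)
    (σ : Fin (n + 1) ≃ (L ≃ₐ[K] L)) (b : Fin n → L)
    (hb_ind : LinearIndependent K b)
    (hb_span : Submodule.span K (Set.range b) = LinearMap.ker (Algebra.trace K L)) :
    IsUnit (Matrix.of fun i j : Fin n => σ j.succ (b i)) :=
  stmt12_general hn ((algEquivEquivAlgHom K L).injective.comp σ.injective) hb_span
end

section
/- Let L/K be a cyclic Galois field extension of degree n with Gal(L/K) = ⟨σ⟩, let k be an integer with 1 ≤ k ≤ n, and let b₁, ..., b_k ∈ L. Then b₁, ..., b_k are linearly dependent over K if and only if det S = 0, where S is the k × k matrix with (i,j) entry σ^{i-1}(b_j) for 1 ≤ i, j ≤ k. -/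
/-!
Let `c` be a relation between the columns of `(σ ^ i (b j))`, scaled to have last entry `1`.
Applying `σ` to the relation in row `i` and subtracting the one in row `i + 1` shows that
`σ c - c`, whose last entry is `0`, is a relation for the smaller family `σ (b j)`, so by
induction `c` is fixed by `σ`. Hence `c` has entries in `K`, and row `0` is a linear dependence
of `b` over `K`.
-/

open Matrix

section Casorati

variable {K L : Type*} {k : ℕ}

section Semiring

variable [CommSemiring K] [Semiring L] [Algebra K L]

/-- The Casorati matrix of a family `b` with respect to an endomorphism `σ`, the analogue for `σ`
of the Wronskian matrix: row `i` is the image of `b` under `σ ^ i`, with rows counted from `0`. -/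
def casoratiMatrix (σ : L →ₐ[K] L) (b : Fin k → L) : Matrix (Fin k) (Fin k) L :=
  of fun i j => (σ ^ (i : ℕ)) (b j)

theorem casoratiMatrix_mulVec_apply (σ : L →ₐ[K] L) (b c : Fin k → L) (i : Fin k) :
    (casoratiMatrix σ b *ᵥ c) i = ∑ j, (σ ^ (i : ℕ)) (b j) * c j :=
  rfl

theorem casoratiMatrix_mulVec_algebraMap (σ : L →ₐ[K] L) (b : Fin k → L) (g : Fin k → K)
    (i : Fin k) :
    (casoratiMatrix σ b *ᵥ (algebraMap K L ∘ g)) i = (σ ^ (i : ℕ)) (∑ j, g j • b j) := by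
  simp only [casoratiMatrix_mulVec_apply, Function.comp_apply, map_sum, map_smul,
    Algebra.smul_def _ ((σ ^ (i : ℕ)) _), Algebra.commutes]

theorem casoratiMatrix_mulVec_init (σ : L →ₐ[K] L) (b : Fin (k + 1) → L)
    {c : Fin (k + 1) → L} (hlast : c (Fin.last k) = 0) (i : Fin k) :
    (casoratiMatrix σ (Fin.init b) *ᵥ Fin.init c) i =
      (casoratiMatrix σ b *ᵥ c) i.castSucc := by
  simp [casoratiMatrix_mulVec_apply, Fin.sum_univ_castSucc, hlast, Fin.init]

end Semiring

theorem casoratiMatrix_mulVec_map_sub [CommSemiring K] [Ring L] [Algebra K L] (σ : L →ₐ[K] L)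
    (b : Fin (k + 1) → L) {c : Fin (k + 1) → L}
    (hlast : σ (c (Fin.last k)) = c (Fin.last k)) (i : Fin k) :
    (casoratiMatrix σ (σ ∘ Fin.init b) *ᵥ Fin.init (σ ∘ c - c)) i =
      σ ((casoratiMatrix σ b *ᵥ c) i.castSucc) - (casoratiMatrix σ b *ᵥ c) i.succ := by
  have hpow (x : L) : σ (σ^[i] x) = σ^[i] (σ x) := (Function.Commute.iterate_self σ i).symm x
  simp [casoratiMatrix_mulVec_apply, Fin.sum_univ_castSucc, hlast, Fin.init, mul_sub, hpow]

theorem linearIndependent_of_det_casoratiMatrix_ne_zero [CommRing K] [CommRing L] [IsDomain L]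
    [Algebra K L] [FaithfulSMul K L] {σ : L →ₐ[K] L} {b : Fin k → L}
    (hdet : (casoratiMatrix σ b).det ≠ 0) : LinearIndependent K b := by
  refine Fintype.linearIndependent_iff.2 fun g hg j => ?_
  have hker : casoratiMatrix σ b *ᵥ (algebraMap K L ∘ g) = 0 := by
    ext i
    rw [casoratiMatrix_mulVec_algebraMap, hg, map_zero, Pi.zero_apply]
  have hzero := congrFun (eq_zero_of_mulVec_eq_zero hdet hker) j
  exact (FaithfulSMul.algebraMap_eq_zero_iff K L).1 hzero

theorem eq_zero_of_sum_mul_eq_zero_of_mem_range_algebraMap {ι : Type*} [Fintype ι] [CommRing K]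
    [Ring L] [Algebra K L] {b c : ι → L} (hb : LinearIndependent K b)
    (hc : ∀ j, c j ∈ Set.range (algebraMap K L)) (hsum : ∑ j, b j * c j = 0) : c = 0 := by
  choose g hg using hc
  have hgb : ∑ j, g j • b j = 0 := by
    simpa only [← hg, ← Algebra.commutes, ← Algebra.smul_def] using hsum
  ext j
  rw [← hg j, Fintype.linearIndependent_iff.1 hb g hgb j, map_zero, Pi.zero_apply]

theorem eq_zero_of_casoratiMatrix_mulVec_eq_zero [CommRing K] [Field L] [Algebra K L]
    {σ : L →ₐ[K] L} (hσ : ∀ x, σ x = x → x ∈ Set.range (algebraMap K L))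
    {b c : Fin k → L} (hb : LinearIndependent K b) (hc : casoratiMatrix σ b *ᵥ c = 0) :
    c = 0 := by
  induction k with
  | zero => exact Subsingleton.elim _ _
  | succ k ih =>
    have hinit : LinearIndependent K (Fin.init b) := hb.comp _ (Fin.castSucc_injective k)
    by_cases hlast : c (Fin.last k) = 0
    · have hzero : Fin.init c = 0 := ih hinit <| by
        ext i
        rw [casoratiMatrix_mulVec_init σ b hlast, hc, Pi.zero_apply, Pi.zero_apply]
      ext j
      exact Fin.lastCases hlast (congrFun hzero) j
    · let d : Fin (k + 1) → L := (c (Fin.last k))⁻¹ • c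
      have hd : casoratiMatrix σ b *ᵥ d = 0 := by rw [mulVec_smul, hc, smul_zero]
      have hdlast : d (Fin.last k) = 1 := inv_mul_cancel₀ hlast
      have hσdlast : σ (d (Fin.last k)) = d (Fin.last k) := by rw [hdlast, map_one]
      have hσb : LinearIndependent K (σ ∘ Fin.init b) :=
        hinit.map' σ.toLinearMap (LinearMap.ker_eq_bot.2 σ.toRingHom.injective)
      have hdiff : Fin.init (σ ∘ d - d) = 0 := ih hσb <| by
        ext i
        simp only [casoratiMatrix_mulVec_map_sub σ b hσdlast, hd, Pi.zero_apply, map_zero, sub_zero]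
      have hfixed (j : Fin (k + 1)) : σ (d j) = d j :=
        Fin.lastCases hσdlast (fun j => sub_eq_zero.1 (congrFun hdiff j)) j
      have hdzero : d = 0 :=
        eq_zero_of_sum_mul_eq_zero_of_mem_range_algebraMap hb (fun j => hσ _ (hfixed j))
          (congrFun hd 0)
      exact absurd (hdlast.symm.trans (congrFun hdzero _)) one_ne_zero

end Casorati

theorem mem_range_algebraMap_of_generator_apply_eq_self {K L : Type*} [Field K] [Field L]
    [Algebra K L] [IsGalois K L] {σ : L ≃ₐ[K] L}
    (hσ : ∀ τ : L ≃ₐ[K] L, τ ∈ Subgroup.zpowers σ) {x : L} (hx : σ x = x) :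
    x ∈ Set.range (algebraMap K L) := by
  have hle : Subgroup.zpowers σ ≤ MulAction.stabilizer (L ≃ₐ[K] L) x :=
    Subgroup.zpowers_le.2 hx
  exact (InfiniteGalois.mem_range_algebraMap_iff_fixed x).2 fun τ => hle (hσ τ)

theorem stmt17_general {K L : Type*} [Field K] [Field L] [Algebra K L] {σ : L →ₐ[K] L}
    (hσ : ∀ x, σ x = x → x ∈ Set.range (algebraMap K L)) {k : ℕ} (b : Fin k → L) :
    ¬ LinearIndependent K b ↔ (casoratiMatrix σ b).det = 0 := by
  refine ⟨fun hb => not_not.1 (mt linearIndependent_of_det_casoratiMatrix_ne_zero hb), ?_⟩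
  intro hdet hb
  obtain ⟨c, hc_ne, hc⟩ := exists_mulVec_eq_zero_iff.2 hdet
  exact hc_ne (eq_zero_of_casoratiMatrix_mulVec_eq_zero hσ hb hc)

/-- Let L/K be a cyclic Galois extension of degree n with Gal(L/K) = ⟨σ⟩, let
1 ≤ k ≤ n and b₁, ..., b_k ∈ L. Then b₁, ..., b_k are linearly dependent over K
iff det S = 0, where S is the k × k matrix with (i,j) entry σ^(i-1)(bⱼ). -/
theorem stmt17 (K L : Type*) [Field K] [Field L] [Algebra K L]
    [FiniteDimensional K L] [IsGalois K L]
    (n : ℕ) (hn : Module.finrank K L = n)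
    (σ : L ≃ₐ[K] L) (hσ : ∀ τ : L ≃ₐ[K] L, τ ∈ Subgroup.zpowers σ)
    (k : ℕ) (hk1 : 1 ≤ k) (hkn : k ≤ n) (b : Fin k → L) :
    ¬ LinearIndependent K b ↔
      (Matrix.of fun i j : Fin k => (σ ^ (i : ℕ)) (b j)).det = 0 := by
  simpa [casoratiMatrix] using stmt17_general (σ := (σ : L →ₐ[K] L))
    (fun _ => mem_range_algebraMap_of_generator_apply_eq_self hσ) b
end
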